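/- Let M be a multiset of size nq in AG(2,q), q = p^h, h > 1. Assume M admits exactly k special directions with k·n ≤ p. Then any line whose slope is a special direction of M and which passes through an affine point of multiplicity zero in M contains fewer than p points of M (counted with multiplicity). -/

import Mathlib

/-!
The proof counts the points of `M` along the pencil of lines through `P₀`. As `P₀` has multiplicity
zero, every point of `M` lies on at most one line of the pencil, so the `q + 1` lines together carry
at most `n * q` points (`sum_lineCount_pencil_le`). The `q + 1 - k` lines in non-special directions
carry exactly `n` points each, which leaves at most `(k - 1) * n` points for the lines in special
directions. If `n > 0`, this is at most `p - n < p`; if `n = 0`, it is zero.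
-/

attribute [local instance] Classical.propDecidable

noncomputable section

open Polynomial

variable {F : Type} [Field F]

/-- Point `P` of `AG(2,q)` lies on the line with slope `d` (`none` stands for slope `∞`)
and parameter `b`. -/
def onAffLine (d : Option F) (b : F) (P : F × F) : Prop :=
  match d with
  | some m => P.2 = m * P.1 + b
  | none => P.1 + b = 0

/-- Number of points of the multiset `M` (counted with multiplicity) on the line with
slope `d` and parameter `b`. -/
def lineCount (M : Multiset (F × F)) (d : Option F) (b : F) : ℕ :=
  Multiset.countP (onAffLine d b) M

/-- `d` is a mod-special direction of `M` (w.r.t. the prime `p`). -/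
def IsModSpecial (p : ℕ) (M : Multiset (F × F)) (d : Option F) : Prop :=
  ¬ ∀ b₁ b₂ : F, (lineCount M d b₁ : ZMod p) = (lineCount M d b₂ : ZMod p)

/-- `d` is a special direction of `M`: some line with slope `d` contains neither
`⌊|M|/q⌋` nor `⌈|M|/q⌉` points of `M`. -/
def IsSpecial [Fintype F] (M : Multiset (F × F)) (d : Option F) : Prop :=
  ¬ ∀ b : F, lineCount M d b = Multiset.card M / Fintype.card F ∨
      lineCount M d b = (Multiset.card M + Fintype.card F - 1) / Fintype.card F

/-- The multiset of the `q` points of an affine line, each with multiplicity one. -/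
def affLine [Fintype F] (d : Option F) (b : F) : Multiset (F × F) :=
  (Finset.univ.filter (onAffLine d b)).val

/-- The projection function of `M` from direction `d`: the unique polynomial of degree
at most `q - 1` whose value at each `b` is the number of points of `M` on the
corresponding line reduced modulo `p` (viewed in the prime subfield of `F`). -/
def prPoly [Fintype F] (M : Multiset (F × F)) (d : Option F) : F[X] :=
  Lagrange.interpolate Finset.univ id (fun b => (lineCount M d b : F))

/-- The parameter of the line with slope `d` through `P`. -/
def lineParam (P : F × F) : Option F → F
  | some m => P.2 - m * P.1
  | none => -P.1

theorem onAffLine_iff (P : F × F) (d : Option F) (b : F) :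
    onAffLine d b P ↔ b = lineParam P d := by
  cases d with
  | none => simp only [onAffLine, lineParam]; grind
  | some m => simp only [onAffLine, lineParam]; grind

/-- Two distinct points are joined by at most one direction. -/
theorem direction_unique {P Q : F × F} (hPQ : Q ≠ P) {d e : Option F}
    (hd : onAffLine d (lineParam P d) Q) (he : onAffLine e (lineParam P e) Q) : d = e := by
  obtain ⟨x, y⟩ := P
  obtain ⟨u, v⟩ := Q
  rw [Ne, Prod.mk.injEq] at hPQ
  cases d with
  | none =>
    cases e with
    | none => rfl
    | some m => simp only [onAffLine, lineParam] at hd he; grind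
  | some l =>
    cases e with
    | none => simp only [onAffLine, lineParam] at hd he; grind
    | some m =>
      simp only [onAffLine, lineParam] at hd he
      have hmul : (l - m) * (u - x) = 0 := by linear_combination he - hd
      rcases mul_eq_zero.mp hmul with h | h
      · rw [sub_eq_zero.mp h]
      · grind

/-- Every point of `M` other than `P` lies on at most one line through `P`, so if `P` is not in `M`,
the lines through `P` together carry at most `|M|` points. -/
theorem sum_lineCount_pencil_le [Fintype F] (P : F × F) (M : Multiset (F × F)) (hP : P ∉ M) :
    ∑ d : Option F, lineCount M d (lineParam P d) ≤ Multiset.card M := by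
  induction M using Multiset.induction_on with
  | empty => simp [lineCount]
  | cons Q M ih =>
    rw [Multiset.mem_cons, not_or] at hP
    have hM := ih hP.2
    have hQ : ∑ d : Option F, (if onAffLine d (lineParam P d) Q then 1 else 0) ≤ 1 := by
      rw [← Finset.card_filter, Finset.card_le_one]
      intro d hd e he
      rw [Finset.mem_filter] at hd he
      exact direction_unique (Ne.symm hP.1) hd.2 he.2
    simp only [lineCount, Multiset.countP_cons, Finset.sum_add_distrib, Multiset.card_cons] at hM ⊢
    omega

theorem stmt7 (p h n k : ℕ) [Fact p.Prime] (hh : 1 < h)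
    (F : Type) [Field F] [Fintype F] [CharP F p] (hcard : Fintype.card F = p ^ h)
    (M : Multiset (F × F)) (hM : Multiset.card M = n * Fintype.card F)
    (hk : (Finset.univ.filter (fun d : Option F => IsSpecial M d)).card = k)
    (hkn : k * n ≤ p)
    (d : Option F) (hd : IsSpecial M d) (b : F)
    (P₀ : F × F) (hP₀ : onAffLine d b P₀) (hP₀m : M.count P₀ = 0) :
    lineCount M d b < p := by
  have hq : 0 < Fintype.card F := Fintype.card_pos
  have hp : 0 < p := (Fact.out : p.Prime).pos
  -- As `q` divides `|M|`, both roundings of `|M| / q` in the definition of `IsSpecial` equal `n`.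
  have hn : ∀ e : Option F, ¬ IsSpecial M e → ∀ c, lineCount M e c = n := by
    intro e he c
    have hfloor : Multiset.card M / Fintype.card F = n := by
      rw [hM, Nat.mul_div_cancel _ hq]
    have hceil : (Multiset.card M + Fintype.card F - 1) / Fintype.card F = n := by
      rw [hM, Nat.add_sub_assoc (Nat.one_le_iff_ne_zero.mpr hq.ne'), mul_comm, Nat.mul_add_div hq,
        Nat.div_eq_of_lt (Nat.sub_lt hq one_pos), add_zero]
    rw [IsSpecial, not_not, hfloor, hceil] at he
    exact or_self_iff.mp (he c)
  have hsum := sum_lineCount_pencil_le P₀ M (Multiset.count_eq_zero.mp hP₀m)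
  rw [← Finset.sum_filter_add_sum_filter_not Finset.univ (fun e : Option F => IsSpecial M e)]
    at hsum
  have hspec : lineCount M d b ≤ ∑ e : Option F with IsSpecial M e,
      lineCount M e (lineParam P₀ e) := by
    rw [(onAffLine_iff P₀ d b).mp hP₀]
    exact Finset.single_le_sum (f := fun e => lineCount M e (lineParam P₀ e))
      (fun _ _ => Nat.zero_le _) (Finset.mem_filter.mpr ⟨Finset.mem_univ d, hd⟩)
  have hnon : ∑ e : Option F with ¬ IsSpecial M e, lineCount M e (lineParam P₀ e) =
      (Finset.univ.filter (fun e : Option F => ¬ IsSpecial M e)).card * n := by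
    rw [Finset.sum_congr rfl fun e he => hn e (Finset.mem_filter.mp he).2 _,
      Finset.sum_const, smul_eq_mul]
  have hdirs := Finset.card_filter_add_card_filter_not (s := Finset.univ)
    (fun e : Option F => IsSpecial M e)
  rw [Finset.card_univ, Fintype.card_option, hk] at hdirs
  rw [hnon, hM] at hsum
  generalize (Finset.univ.filter (fun e : Option F => ¬ IsSpecial M e)).card = r at hsum hdirs
  have hbound : lineCount M d b + n ≤ k * n := by
    have hdirs_mul : k * n + r * n = Fintype.card F * n + n := by
      rw [← add_mul, hdirs, add_mul, one_mul]
    rw [mul_comm n] at hsum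
    omega
  rcases Nat.eq_zero_or_pos n with rfl | hpos
  · omega
  · omega

end
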